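/- Let G = (V,E) be a locally finite graph carrying the observation model with side information coupled across ε, and let S ⊆ V be a finite nonempty set. Then for every ε ∈ [0,1]: ∑_{u∈S} ∫_0^ε I( θ_u ; θ_{∂S} | Y^{(ε')}_S ) dε' ≤ log|X| · |∂S|, where θ_{∂S} = (θ_v)_{v∈∂S} and ∂S = {u ∈ S : ∃v ∉ S, (u,v) ∈ E}. -/

import Mathlib

open MeasureTheory ProbabilityTheory Filter
open scoped ENNReal Classical

noncomputable section

def gball {V : Type*} (G : SimpleGraph V) (u : V) (l : ℕ) : Set V :=
  {v | ∃ w : G.Walk u v, w.length ≤ l}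

def vBoundary {V : Type*} (G : SimpleGraph V) (S : Set V) : Set V :=
  {u | u ∈ S ∧ ∃ v, v ∉ S ∧ G.Adj u v}

def Amenable {V : Type*} (G : SimpleGraph V) : Prop :=
  ∀ δ : ℝ, 0 < δ → ∃ S : Set V, S.Finite ∧ S.Nonempty ∧
    ((vBoundary G S).ncard : ℝ) < δ * (S.ncard : ℝ)

def VertexTransitive {V : Type*} (G : SimpleGraph V) : Prop :=
  ∀ u v : V, ∃ φ : G ≃g G, φ u = v

def LocallyFiniteGraph {V : Type*} (G : SimpleGraph V) : Prop :=
  ∀ v : V, (G.neighborSet v).Finite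

def graphOf {V : Type*} (E : Set (V × V)) : SimpleGraph V :=
  SimpleGraph.fromRel (fun u v => (u, v) ∈ E)

def BallIso {V W : Type*} (G : SimpleGraph V) (u : V) (H : SimpleGraph W) (o : W)
    (l : ℕ) : Prop :=
  ∃ φ : gball G u l ≃ gball H o l,
    (∀ hu : u ∈ gball G u l, ((φ ⟨u, hu⟩ : gball H o l) : W) = o) ∧
      ∀ a b : gball G u l, G.Adj a b ↔ H.Adj (φ a) (φ b)

def LocalWeakLimit {W : Type*} (Gn : ∀ n : ℕ, SimpleGraph (Fin n))
    (H : SimpleGraph W) (o : W) : Prop :=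
  ∀ l : ℕ, Tendsto
    (fun n : ℕ => (Nat.card {u : Fin n // BallIso (Gn n) u H o l} : ℝ) / n) atTop (nhds 1)

structure Model (X Y' : Type*) {V : Type*} (Q : X → X → Y' → ℝ) (E : Set (V × V))
    [Fintype X] [Fintype Y'] where
  Ω : Type
  mΩ : MeasurableSpace Ω
  P : @Measure Ω mΩ
  probP : @IsProbabilityMeasure Ω mΩ P
  θ : V → Ω → X
  Yobs : V × V → Ω → Y'
  U : V → Ω → ℝ
  measθ : ∀ v, @Measurable Ω X mΩ ⊤ (θ v)
  measY : ∀ e, @Measurable Ω Y' mΩ ⊤ (Yobs e)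
  measU : ∀ v, @Measurable Ω ℝ mΩ _ (U v)
  lawθY : ∀ (S : Finset V) (F : Finset (V × V)),
    (∀ e ∈ F, e ∈ E ∧ e.1 ∈ S ∧ e.2 ∈ S) →
    ∀ (σ : V → X) (y : V × V → Y'),
      (P {ω | (∀ v ∈ S, θ v ω = σ v) ∧ ∀ e ∈ F, Yobs e ω = y e}).toReal
        = ((Fintype.card X : ℝ)⁻¹) ^ S.card * ∏ e ∈ F, Q (σ e.1) (σ e.2) (y e)
  lawU : ∀ (T : Finset V) (a : V → ℝ), (∀ v, a v ∈ Set.Icc (0:ℝ) 1) →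
    ∀ (S : Finset V) (F : Finset (V × V)) (σ : V → X) (y : V × V → Y'),
      (P {ω | (∀ v ∈ T, U v ω ≤ a v) ∧ (∀ v ∈ S, θ v ω = σ v) ∧
          ∀ e ∈ F, Yobs e ω = y e}).toReal
        = (∏ v ∈ T, a v) *
          (P {ω | (∀ v ∈ S, θ v ω = σ v) ∧ ∀ e ∈ F, Yobs e ω = y e}).toReal

attribute [instance] Model.mΩ

namespace Model

variable {X Y' V : Type*} [Fintype X] [Fintype Y'] {Q : X → X → Y' → ℝ} {E : Set (V × V)}

def ξ (M : Model X Y' Q E) (ε : ℝ) (v : V) (ω : M.Ω) : Option X :=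
  if M.U v ω ≤ ε then some (M.θ v ω) else none

def obsAlg (M : Model X Y' Q E) (ε : ℝ) (S : Set V) : MeasurableSpace M.Ω :=
  (⨆ e ∈ {e : V × V | e ∈ E ∧ e.1 ∈ S ∧ e.2 ∈ S}, MeasurableSpace.comap (M.Yobs e) ⊤) ⊔
    ⨆ v ∈ S, MeasurableSpace.comap (M.ξ ε v) ⊤

def marg (M : Model X Y' Q E) (ε : ℝ) (S : Set V) (u : V) (x : X) : M.Ω → ℝ :=
  M.P[Set.indicator {ω | M.θ u ω = x} (fun _ => (1 : ℝ)) | M.obsAlg ε S]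

end Model

def riskOf {X Y' : Type*} [Fintype X] [Fintype Y'] {n : ℕ} {Q : X → X → Y' → ℝ}
    {E : Set (Fin n × Fin n)} (M : Model X Y' Q E) (f : X → ℝ)
    (Xh : M.Ω → Fin n → Fin n → ℝ) : ℝ :=
  ((n : ℝ) ^ 2)⁻¹ * ∫ ω, (∑ u, ∑ v, (f (M.θ u ω) * f (M.θ v ω) - Xh ω u v) ^ 2) ∂M.P


/-- Shannon entropy of (the law of) a random variable with (essentially) finitely many
values, with the convention 0 log 0 = 0. -/
def entropy {Ω α : Type*} [MeasurableSpace Ω] (P : Measure Ω) (Z : Ω → α) : ℝ :=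
  -∑' a : α, ((P (Z ⁻¹' {a})).toReal * Real.log (P (Z ⁻¹' {a})).toReal)

/-- Conditional mutual information I(A;B|C) = H(A,C) + H(B,C) - H(A,B,C) - H(C). -/
def condMI {Ω α β γ : Type*} [MeasurableSpace Ω] (P : Measure Ω)
    (A : Ω → α) (B : Ω → β) (C : Ω → γ) : ℝ :=
  entropy P (fun ω => (A ω, C ω)) + entropy P (fun ω => (B ω, C ω))
    - entropy P (fun ω => (A ω, B ω, C ω)) - entropy P C

namespace Model

variable {X Y' V : Type*} [Fintype X] [Fintype Y'] {Q : X → X → Y' → ℝ} {E : Set (V × V)}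

/-- The labels on a subset of vertices, as a single (masked) random variable. -/
def thetaOn (M : Model X Y' Q E) (S : Set V) : M.Ω → (V → Option X) :=
  fun ω v => if v ∈ S then some (M.θ v ω) else none

/-- All the observations available in the region S (edge observations on edges inside S
and side information on S), as a single (masked) random variable. -/
def obsRV (M : Model X Y' Q E) (ε : ℝ) (S : Set V) :
    M.Ω → (V × V → Option Y') × (V → Option (Option X)) :=
  fun ω =>
    (fun e => if e ∈ E ∧ e.1 ∈ S ∧ e.2 ∈ S then some (M.Yobs e ω) else none,
     fun v => if v ∈ S then some (M.ξ ε v ω) else none)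

end Model

/-!
At level `ε` the side information reveals the labels on a random subset `A_ε` of `S` that contains
each vertex independently with probability `ε` and is independent of the labels and the edge
observations. Put `h(A) = H(θ_B | Y_E, θ_A)` with `B = ∂S`, a nonnegative function which is
decreasing because entropy is submodular. Conditioning on `A_ε` gives
`I(θ_u ; θ_B | Y^(ε)) = E[h(A_ε) - h(A_ε ∪ {u})]`. By Russo's formula `-d/dε E h(A_ε)` is the sum
over `u ∈ S` of the same decrements averaged over random subsets of `S \ {u}`; these averages are
larger, since the decrement vanishes when `u` is already revealed. Integrating, the sum in question
is at most `h(∅) - E h(A_ε) ≤ h(∅) ≤ H(θ_B) ≤ |B| log |X|`.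
-/

lemma disjSum_union_disjSum {ι κ : Type*} [DecidableEq ι] [DecidableEq κ] (I J : Finset ι)
    (F G : Finset κ) : I.disjSum F ∪ J.disjSum G = (I ∪ J).disjSum (F ∪ G) := by
  simp only [Finset.eq_disjSum_iff, Finset.toLeft_union, Finset.toRight_union,
    Finset.toLeft_disjSum, Finset.toRight_disjSum, and_self]

lemma sigmaMk_eq_sigmaMk_iff {Ω κ : Type*} {α : κ → Type*} {R : Ω → κ} {Z : ∀ k, Ω → α k}
    {ω ω' : Ω} :
    (⟨R ω, Z (R ω) ω⟩ : Σ k, α k) = ⟨R ω', Z (R ω') ω'⟩ ↔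
      R ω = R ω' ∧ Z (R ω) ω = Z (R ω) ω' := by
  rw [Sigma.mk.injEq]
  refine and_congr_right fun h => ?_
  generalize R ω' = k at h
  subst h
  exact heq_iff_eq

section Entropy

variable {Ω α β γ κ : Type*} [MeasurableSpace Ω] {P : Measure Ω}

lemma entropy_eq_tsum_negMulLog (P : Measure Ω) (Z : Ω → α) :
    entropy P Z = ∑' a, Real.negMulLog (P.real (Z ⁻¹' {a})) := by
  simp only [entropy, Real.negMulLog, neg_mul, tsum_neg, Measure.real]

lemma negMulLog_measureReal_fiber_eq_zero (P : Measure Ω) {Z : Ω → α} {a : α}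
    (ha : a ∉ Set.range Z) : Real.negMulLog (P.real (Z ⁻¹' {a})) = 0 := by
  simp [Set.preimage_singleton_eq_empty.2 ha]

lemma entropy_eq_sum_negMulLog (P : Measure Ω) {Z : Ω → α} {s : Finset α} (hs : ∀ ω, Z ω ∈ s) :
    entropy P Z = ∑ a ∈ s, Real.negMulLog (P.real (Z ⁻¹' {a})) := by
  rw [entropy_eq_tsum_negMulLog]
  refine tsum_eq_sum fun a ha => negMulLog_measureReal_fiber_eq_zero P ?_
  rintro ⟨ω, rfl⟩
  exact ha (hs ω)

lemma entropy_eq_tsum_quotient_ker (P : Measure Ω) (Z : Ω → α) :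
    entropy P Z = ∑' q : Quotient (Setoid.ker Z),
      Real.negMulLog (P.real (Z ⁻¹' {(Setoid.quotientKerEquivRange Z q).1})) := by
  have hsupp : (Function.support fun a => Real.negMulLog (P.real (Z ⁻¹' {a}))) ⊆ Set.range Z :=
    fun a ha => of_not_not fun h => ha (negMulLog_measureReal_fiber_eq_zero P h)
  rw [entropy_eq_tsum_negMulLog, ← tsum_subtype_eq_of_support_subset hsupp]
  exact ((Setoid.quotientKerEquivRange Z).tsum_eq
    fun a => Real.negMulLog (P.real (Z ⁻¹' {a.1}))).symm

lemma entropy_congr (P : Measure Ω) {Z : Ω → α} {W : Ω → β}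
    (h : ∀ ω ω', Z ω = Z ω' ↔ W ω = W ω') : entropy P Z = entropy P W := by
  let e : Quotient (Setoid.ker Z) ≃ Quotient (Setoid.ker W) := Quotient.congrRight h
  rw [entropy_eq_tsum_quotient_ker P Z, entropy_eq_tsum_quotient_ker P W, ← e.tsum_eq]
  refine tsum_congr fun q => ?_
  induction q using Quotient.inductionOn with
  | h ω₀ =>
    have hfiber : Z ⁻¹' {Z ω₀} = W ⁻¹' {W ω₀} := Set.ext fun ω => h ω ω₀
    exact congrArg (fun t => Real.negMulLog (P.real t)) hfiber

lemma entropy_nonneg [IsProbabilityMeasure P] (Z : Ω → α) : 0 ≤ entropy P Z := by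
  rw [entropy_eq_tsum_negMulLog]
  exact tsum_nonneg fun a => Real.negMulLog_nonneg measureReal_nonneg measureReal_le_one

lemma sum_mul_log_le_sum_mul_log {s : Finset α} {p q : α → ℝ} (hp : ∀ a ∈ s, 0 ≤ p a)
    (hq : ∀ a ∈ s, 0 ≤ q a) (hpq : ∀ a ∈ s, p a ≠ 0 → q a ≠ 0)
    (hsum : ∑ a ∈ s, q a ≤ ∑ a ∈ s, p a) :
    ∑ a ∈ s, p a * Real.log (q a) ≤ ∑ a ∈ s, p a * Real.log (p a) := by
  have hterm : ∀ a ∈ s, p a * Real.log (q a) ≤ p a * Real.log (p a) + (q a - p a) := by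
    intro a ha
    rcases (hp a ha).eq_or_lt with hp0 | hp0
    · simpa [← hp0] using hq a ha
    have hq0 : 0 < q a := (hq a ha).lt_of_ne' (hpq a ha hp0.ne')
    have hlog := Real.log_le_sub_one_of_pos (div_pos hq0 hp0)
    rw [Real.log_div hq0.ne' hp0.ne', le_sub_iff_add_le, le_div_iff₀ hp0] at hlog
    linarith
  have := Finset.sum_le_sum hterm
  rw [Finset.sum_add_distrib, Finset.sum_sub_distrib] at this
  linarith

lemma mul_log_mul_div_eq {x a b c : ℝ} (h : x ≠ 0 → a ≠ 0 ∧ b ≠ 0 ∧ c ≠ 0) :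
    x * Real.log (a * b / c) = x * Real.log a + x * Real.log b - x * Real.log c := by
  by_cases hx : x = 0
  · simp [hx]
  obtain ⟨ha, hb, hc⟩ := h hx
  rw [Real.log_div (mul_ne_zero ha hb) hc, Real.log_mul ha hb]
  ring

lemma sum_negMulLog_add_negMulLog_sum_le {s : Finset α} {t : Finset β} {p : α → β → ℝ}
    (hp : ∀ a b, 0 ≤ p a b) :
    ∑ a ∈ s, ∑ b ∈ t, Real.negMulLog (p a b) + Real.negMulLog (∑ a ∈ s, ∑ b ∈ t, p a b) ≤
      ∑ a ∈ s, Real.negMulLog (∑ b ∈ t, p a b) + ∑ b ∈ t, Real.negMulLog (∑ a ∈ s, p a b) := by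
  set r : α → ℝ := fun a => ∑ b ∈ t, p a b
  set c : β → ℝ := fun b => ∑ a ∈ s, p a b with hc
  set T : ℝ := ∑ a ∈ s, r a
  have hcT : ∑ b ∈ t, c b = T := Finset.sum_comm
  have hr0 (a) : 0 ≤ r a := Finset.sum_nonneg fun b _ => hp a b
  have hc0 (b) : 0 ≤ c b := Finset.sum_nonneg fun a _ => hp a b
  have hT0 : 0 ≤ T := Finset.sum_nonneg fun a _ => hr0 a
  have hne {a b} (ha : a ∈ s) (hb : b ∈ t) (h : p a b ≠ 0) : r a ≠ 0 ∧ c b ≠ 0 ∧ T ≠ 0 := by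
    have hpab := (hp a b).lt_of_ne' h
    have hra := hpab.trans_le (Finset.single_le_sum (fun b _ => hp a b) hb)
    have hcb := hpab.trans_le (Finset.single_le_sum (f := (p · b)) (fun a _ => hp a b) ha)
    exact ⟨hra.ne', hcb.ne', (hra.trans_le (Finset.single_le_sum (fun a _ => hr0 a) ha)).ne'⟩
  have hsum : ∑ x ∈ s ×ˢ t, r x.1 * c x.2 / T ≤ ∑ x ∈ s ×ˢ t, p x.1 x.2 := by
    rw [← Finset.sum_div, Finset.sum_product, Finset.sum_product]
    simp only [← Finset.mul_sum, hcT, ← Finset.sum_mul]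
    exact (mul_self_div_self T).le
  -- Compare `p` with the product of its marginals, normalized to the same total mass.
  have hgibbs := sum_mul_log_le_sum_mul_log (fun x _ => hp x.1 x.2)
    (fun x _ => div_nonneg (mul_nonneg (hr0 x.1) (hc0 x.2)) hT0)
    (fun x hx h =>
      have ⟨ha, hb⟩ := Finset.mem_product.1 hx
      have ⟨h1, h2, h3⟩ := hne ha hb h
      div_ne_zero (mul_ne_zero h1 h2) h3) hsum
  have hcol : ∑ a ∈ s, ∑ b ∈ t, p a b * Real.log (c b) = ∑ b ∈ t, c b * Real.log (c b) := by
    rw [Finset.sum_comm]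
    simp only [← Finset.sum_mul, hc]
  rw [Finset.sum_product, Finset.sum_product, Finset.sum_congr rfl fun a ha =>
    Finset.sum_congr rfl fun b hb => mul_log_mul_div_eq (hne ha hb)] at hgibbs
  simp only [Finset.sum_add_distrib, Finset.sum_sub_distrib, hcol] at hgibbs
  simp only [← Finset.sum_mul] at hgibbs
  simp only [Real.negMulLog_eq_neg, Finset.sum_neg_distrib]
  linarith

lemma sum_measureReal_fiber_inter [IsFiniteMeasure P] (Z : SimpleFunc Ω α) (t : Set Ω) :
    ∑ a ∈ Z.range, P.real (Z ⁻¹' {a} ∩ t) = P.real t := by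
  have h := sum_measureReal_preimage_singleton (μ := P.restrict t) Z.range
    fun a _ => Z.measurableSet_fiber a
  simpa [measureReal_restrict_apply (Z.measurableSet_fiber _)] using h

lemma entropy_le_log_card [IsProbabilityMeasure P] [Fintype α] (Z : SimpleFunc Ω α) :
    entropy P Z ≤ Real.log (Fintype.card α) := by
  have : Nonempty α := P.nonempty_of_neZero.map Z
  have hcard : (Fintype.card α : ℝ) ≠ 0 := Nat.cast_ne_zero.2 Fintype.card_ne_zero
  have htotal : ∑ a, P.real (Z ⁻¹' {a}) = 1 := by
    have h := sum_measureReal_preimage_singleton (μ := P) Finset.univ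
      fun a _ => Z.measurableSet_fiber a
    simpa using h
  have hgibbs := sum_mul_log_le_sum_mul_log (s := Finset.univ) (p := fun a => P.real (Z ⁻¹' {a}))
    (q := fun _ => (Fintype.card α : ℝ)⁻¹) (fun _ _ => measureReal_nonneg)
    (fun _ _ => by positivity) (fun _ _ _ => inv_ne_zero hcard) (by simp [htotal, hcard])
  rw [← Finset.sum_mul, htotal, Real.log_inv] at hgibbs
  rw [entropy_eq_sum_negMulLog P fun ω => Finset.mem_univ (Z ω)]
  simp only [Real.negMulLog_eq_neg, Finset.sum_neg_distrib]
  linarith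

lemma condMI_nonneg [IsFiniteMeasure P] (A : SimpleFunc Ω α) (B : SimpleFunc Ω β)
    (C : SimpleFunc Ω γ) : 0 ≤ condMI P A B C := by
  have hAC (a c) : (fun ω => (A ω, C ω)) ⁻¹' {(a, c)} = A ⁻¹' {a} ∩ C ⁻¹' {c} := by
    ext ω; simp
  have hBC (b c) : (fun ω => (B ω, C ω)) ⁻¹' {(b, c)} = B ⁻¹' {b} ∩ C ⁻¹' {c} := by
    ext ω; simp
  have hABC (a b c) : (fun ω => (A ω, B ω, C ω)) ⁻¹' {(a, b, c)} =
      A ⁻¹' {a} ∩ (B ⁻¹' {b} ∩ C ⁻¹' {c}) := by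
    ext ω; simp
  have hsumB (a c) : ∑ b ∈ B.range, P.real (A ⁻¹' {a} ∩ (B ⁻¹' {b} ∩ C ⁻¹' {c})) =
      P.real (A ⁻¹' {a} ∩ C ⁻¹' {c}) := by
    simp only [Set.inter_left_comm (A ⁻¹' {a}), sum_measureReal_fiber_inter]
  rw [condMI, entropy_eq_sum_negMulLog P (s := A.range ×ˢ C.range) (by simp),
    entropy_eq_sum_negMulLog P (s := B.range ×ˢ C.range) (by simp),
    entropy_eq_sum_negMulLog P (s := A.range ×ˢ B.range ×ˢ C.range) (by simp),
    entropy_eq_sum_negMulLog P (s := C.range) (by simp)]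
  simp only [Finset.sum_product_right, hAC, hBC, hABC]
  rw [Finset.sum_congr rfl fun c _ => Finset.sum_comm, ← Finset.sum_add_distrib,
    ← Finset.sum_sub_distrib, ← Finset.sum_sub_distrib]
  refine Finset.sum_nonneg fun c _ => ?_
  have h := sum_negMulLog_add_negMulLog_sum_le (s := A.range) (t := B.range)
    (p := fun a b => P.real (A ⁻¹' {a} ∩ (B ⁻¹' {b} ∩ C ⁻¹' {c}))) fun _ _ => measureReal_nonneg
  simp only [hsumB, sum_measureReal_fiber_inter] at h
  linarith

lemma entropy_sigmaMk [IsProbabilityMeasure P] {α : κ → Type*} {R : Ω → κ} {T : Finset κ}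
    (hR : ∀ ω, R ω ∈ T) (Z : ∀ k, SimpleFunc Ω (α k))
    (hind : ∀ k ∈ T, ∀ a, P.real (R ⁻¹' {k} ∩ Z k ⁻¹' {a}) =
      P.real (R ⁻¹' {k}) * P.real (Z k ⁻¹' {a})) :
    entropy P (fun ω => (⟨R ω, Z (R ω) ω⟩ : Σ k, α k)) =
      entropy P R + ∑ k ∈ T, P.real (R ⁻¹' {k}) * entropy P (Z k) := by
  have hfiber (k) (a : α k) : (fun ω => (⟨R ω, Z (R ω) ω⟩ : Σ k, α k)) ⁻¹' {⟨k, a⟩} =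
      R ⁻¹' {k} ∩ Z k ⁻¹' {a} := by
    ext ω
    simp only [Set.mem_preimage, Set.mem_singleton_iff, Set.mem_inter_iff, Sigma.mk.injEq]
    exact and_congr_right fun h => by subst h; exact heq_iff_eq
  have htotal (k) : ∑ a ∈ (Z k).range, P.real (Z k ⁻¹' {a}) = 1 := by
    simpa using sum_measureReal_fiber_inter (P := P) (Z k) Set.univ
  rw [entropy_eq_sum_negMulLog P (s := T.sigma fun k => (Z k).range) (by simp [hR]),
    entropy_eq_sum_negMulLog P hR, Finset.sum_sigma, ← Finset.sum_add_distrib]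
  refine Finset.sum_congr rfl fun k hk => ?_
  simp only [hfiber, hind k hk, Real.negMulLog_mul, Finset.sum_add_distrib, ← Finset.sum_mul,
    ← Finset.mul_sum]
  rw [htotal, one_mul, entropy_eq_sum_negMulLog P (s := (Z k).range) (by simp)]

end Entropy

section JointEntropy

variable {Ω ι α : Type*} [MeasurableSpace Ω] {P : Measure Ω}

/-- The joint random variable `ω ↦ (Z i ω)_{i ∈ I}` of a finite subfamily of a family of simple
random variables. -/
def joint (Z : ι → SimpleFunc Ω α) (I : Finset ι) : SimpleFunc Ω (I → α) where
  toFun ω i := Z i ω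
  measurableSet_fiber' z := by
    have hfiber : (fun ω (i : I) => Z i ω) ⁻¹' {z} = ⋂ i : I, Z i ⁻¹' {z i} := by
      ext ω
      simp [funext_iff]
    exact hfiber ▸ MeasurableSet.iInter fun i => (Z i).measurableSet_fiber (z i)
  finite_range' := (Set.Finite.pi' fun i : I => (Z i).finite_range).subset <|
    Set.range_subset_iff.2 fun ω i => Set.mem_range_self ω

lemma joint_eq_joint_iff {Z : ι → SimpleFunc Ω α} {I : Finset ι} {ω ω' : Ω} :
    joint Z I ω = joint Z I ω' ↔ ∀ i ∈ I, Z i ω = Z i ω' :=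
  funext_iff.trans Subtype.forall

/-- The entropy `H(Z_I)` of a finite subfamily, as a function of its set of indices `I`. -/
def jointEntropy (P : Measure Ω) (Z : ι → SimpleFunc Ω α) (I : Finset ι) : ℝ :=
  entropy P (joint Z I)

lemma jointEntropy_submodular [IsFiniteMeasure P] [DecidableEq ι] (Z : ι → SimpleFunc Ω α)
    (I J K : Finset ι) :
    jointEntropy P Z (I ∪ J ∪ K) + jointEntropy P Z K ≤
      jointEntropy P Z (I ∪ K) + jointEntropy P Z (J ∪ K) := by
  have hpair (I) : entropy P (fun ω => (joint Z I ω, joint Z K ω)) = jointEntropy P Z (I ∪ K) :=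
    entropy_congr P fun ω ω' => by
      simp only [Prod.mk.injEq, joint_eq_joint_iff, Finset.forall_mem_union]
  have htriple : entropy P (fun ω => (joint Z I ω, joint Z J ω, joint Z K ω)) =
      jointEntropy P Z (I ∪ J ∪ K) :=
    entropy_congr P fun ω ω' => by
      simp only [Prod.mk.injEq, joint_eq_joint_iff, Finset.forall_mem_union, and_assoc]
  have h := condMI_nonneg (P := P) (joint Z I) (joint Z J) (joint Z K)
  rw [condMI, hpair, hpair, htriple, ← jointEntropy] at h
  linarith

lemma jointEntropy_mono [IsFiniteMeasure P] (Z : ι → SimpleFunc Ω α) :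
    Monotone (jointEntropy P Z) := fun K I h => by
  classical
  have := jointEntropy_submodular (P := P) Z I I K
  rw [Finset.union_self, Finset.union_eq_left.2 h] at this
  linarith

lemma jointEntropy_le_card_mul_log [IsProbabilityMeasure P] [Fintype α] (Z : ι → SimpleFunc Ω α)
    (I : Finset ι) : jointEntropy P Z I ≤ I.card * Real.log (Fintype.card α) := by
  simpa [jointEntropy] using entropy_le_log_card (P := P) (joint Z I)

end JointEntropy

section IndependentEvents

variable {Ω V : Type*} [MeasurableSpace Ω] {P : Measure Ω}

lemma measureReal_biInter_inter_biInter_compl [IsFiniteMeasure P] {s : V → Set Ω}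
    (hs : ∀ v, MeasurableSet (s v)) {D : Set Ω} {p : ℝ}
    (hind : ∀ T : Finset V, P.real ((⋂ v ∈ T, s v) ∩ D) = p ^ T.card * P.real D)
    (N T : Finset V) (hTN : Disjoint T N) :
    P.real ((⋂ v ∈ T, s v) ∩ (⋂ v ∈ N, (s v)ᶜ) ∩ D) =
      p ^ T.card * (1 - p) ^ N.card * P.real D := by
  classical
  induction N using Finset.induction_on generalizing T with
  | empty => simpa using hind T
  | insert v N hv ih =>
    rw [Finset.disjoint_insert_right] at hTN
    have hinsert := ih (insert v T) (Finset.disjoint_insert_left.2 ⟨hv, hTN.2⟩)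
    have hsplit := measureReal_inter_add_sdiff (μ := P)
      (s := (⋂ v ∈ T, s v) ∩ (⋂ v ∈ N, (s v)ᶜ) ∩ D) (hs v)
    rw [ih T hTN.2] at hsplit
    rw [Finset.card_insert_of_notMem hTN.1, Finset.set_biInter_insert] at hinsert
    rw [Finset.card_insert_of_notMem hv, Finset.set_biInter_insert]
    have hin : (⋂ v ∈ T, s v) ∩ (⋂ v ∈ N, (s v)ᶜ) ∩ D ∩ s v =
        s v ∩ (⋂ v ∈ T, s v) ∩ (⋂ v ∈ N, (s v)ᶜ) ∩ D := by
      simp only [Set.inter_comm _ (s v), Set.inter_assoc]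
    have hout : ((⋂ v ∈ T, s v) ∩ (⋂ v ∈ N, (s v)ᶜ) ∩ D) \ s v =
        (⋂ v ∈ T, s v) ∩ ((s v)ᶜ ∩ ⋂ v ∈ N, (s v)ᶜ) ∩ D := by
      rw [Set.sdiff_eq, Set.inter_right_comm, Set.inter_assoc (⋂ v ∈ T, s v), Set.inter_comm (s v)ᶜ]
    rw [hin, hout, hinsert] at hsplit
    linear_combination hsplit

end IndependentEvents

section BernoulliSubset

variable {Ω V : Type*} [DecidableEq V] {t ε : ℝ} {S A : Finset V} {u : V} {h : Finset V → ℝ}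

/-- The probability that the subset `A` of `S` is drawn when each element of `S` is kept
independently with probability `t`. -/
def bernoulliWeight (t : ℝ) (S A : Finset V) : ℝ :=
  t ^ A.card * (1 - t) ^ (S \ A).card

/-- The expectation `E h(A)` for a random subset `A` of `S` keeping each element independently
with probability `t`. -/
def bernoulliMean (t : ℝ) (S : Finset V) (h : Finset V → ℝ) : ℝ :=
  ∑ A ∈ S.powerset, bernoulliWeight t S A * h A

lemma bernoulliMean_nonneg (ht : t ∈ Set.Icc (0 : ℝ) 1) (S : Finset V) (hh : ∀ A, 0 ≤ h A) :
    0 ≤ bernoulliMean t S h :=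
  Finset.sum_nonneg fun A _ => mul_nonneg
    (mul_nonneg (pow_nonneg ht.1 _) (pow_nonneg (sub_nonneg.2 ht.2) _)) (hh A)

lemma bernoulliMean_sub (t : ℝ) (S : Finset V) (h g : Finset V → ℝ) :
    bernoulliMean t S (fun A => h A - g A) = bernoulliMean t S h - bernoulliMean t S g := by
  simp only [bernoulliMean, mul_sub, Finset.sum_sub_distrib]

lemma bernoulliMean_insert (hu : u ∉ S) (t : ℝ) (h : Finset V → ℝ) :
    bernoulliMean t (insert u S) h =
      (1 - t) * bernoulliMean t S h + t * bernoulliMean t S fun A => h (insert u A) := by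
  simp only [bernoulliMean, Finset.sum_powerset_insert hu, Finset.mul_sum]
  refine congrArg₂ (· + ·) (Finset.sum_congr rfl fun A hA => ?_)
    (Finset.sum_congr rfl fun A hA => ?_)
  all_goals
    have huA : u ∉ A := fun huA => hu (Finset.mem_powerset.1 hA huA)
  · rw [bernoulliWeight, bernoulliWeight, Finset.insert_sdiff_of_notMem _ huA,
      Finset.card_insert_of_notMem fun hu' => hu (Finset.mem_sdiff.1 hu').1]
    ring
  · rw [bernoulliWeight, bernoulliWeight, Finset.insert_sdiff_insert,
      Finset.sdiff_insert_of_notMem hu, Finset.card_insert_of_notMem huA]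
    ring

lemma bernoulliMean_zero (S : Finset V) (h : Finset V → ℝ) : bernoulliMean 0 S h = h ∅ := by
  induction S using Finset.induction_on with
  | empty => simp [bernoulliMean, bernoulliWeight]
  | insert u S hu ih => rw [bernoulliMean_insert hu, ih, sub_zero, one_mul, zero_mul, add_zero]

lemma bernoulliMean_sub_insert (hu : u ∈ S) (t : ℝ) (h : Finset V → ℝ) :
    bernoulliMean t S (fun A => h A - h (insert u A)) =
      (1 - t) * bernoulliMean t (S.erase u) fun A => h A - h (insert u A) := by
  conv_lhs => rw [← Finset.insert_erase hu, bernoulliMean_insert (Finset.notMem_erase u S)]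
  simp only [Finset.insert_idem, sub_self, bernoulliMean, mul_zero, Finset.sum_const_zero,
    add_zero]

lemma hasDerivAt_bernoulliMean (t : ℝ) (S : Finset V) (h : Finset V → ℝ) :
    HasDerivAt (fun t => bernoulliMean t S h)
      (∑ u ∈ S, bernoulliMean t (S.erase u) fun A => h (insert u A) - h A) t := by
  induction S using Finset.induction_on generalizing h with
  | empty => simpa [bernoulliMean, bernoulliWeight] using hasDerivAt_const t (h ∅)
  | insert u S hu ih =>
    have hderiv := (((hasDerivAt_id t).const_sub 1).mul (ih h)).add
      ((hasDerivAt_id t).mul (ih fun A => h (insert u A)))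
    have hstep : ∀ v ∈ S, bernoulliMean t ((insert u S).erase v) (fun A => h (insert v A) - h A) =
        (1 - t) * bernoulliMean t (S.erase v) (fun A => h (insert v A) - h A) +
          t * bernoulliMean t (S.erase v) fun A => h (insert u (insert v A)) - h (insert u A) := by
      intro v hv
      rw [Finset.erase_insert_of_ne (ne_of_mem_of_not_mem hv hu).symm,
        bernoulliMean_insert fun hu' => hu (Finset.mem_of_mem_erase hu')]
      simp only [Finset.insert_comm v u]
    simp only [bernoulliMean_insert hu]
    refine hderiv.congr_deriv ?_
    rw [Finset.sum_insert hu, Finset.erase_insert hu, Finset.sum_congr rfl hstep,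
      Finset.sum_add_distrib, ← Finset.mul_sum, ← Finset.mul_sum, bernoulliMean_sub, id]
    ring

lemma continuous_bernoulliMean (S : Finset V) (h : Finset V → ℝ) :
    Continuous fun t => bernoulliMean t S h :=
  continuous_iff_continuousAt.2 fun t => (hasDerivAt_bernoulliMean t S h).continuousAt

lemma sum_integral_bernoulliMean_sub_insert (S : Finset V) (h : Finset V → ℝ) (ε : ℝ) :
    ∑ u ∈ S, ∫ t in (0 : ℝ)..ε, bernoulliMean t (S.erase u) (fun A => h A - h (insert u A)) =
      h ∅ - bernoulliMean ε S h := by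
  have h_int (u : V) (g : Finset V → ℝ) : IntervalIntegrable
      (fun t => bernoulliMean t (S.erase u) g) volume 0 ε :=
    (continuous_bernoulliMean _ g).intervalIntegrable _ _
  have hftc := intervalIntegral.integral_eq_sub_of_hasDerivAt (a := 0) (b := ε)
    (fun t _ => hasDerivAt_bernoulliMean t S h)
    (Continuous.intervalIntegrable (continuous_finsetSum _ fun u _ =>
      continuous_bernoulliMean _ _) _ _)
  rw [intervalIntegral.integral_finsetSum fun u _ => h_int u _, bernoulliMean_zero] at hftc
  rw [← neg_sub, ← hftc, ← Finset.sum_neg_distrib]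
  refine Finset.sum_congr rfl fun u _ => ?_
  rw [← intervalIntegral.integral_neg]
  simp only [bernoulliMean_sub, neg_sub]

lemma sum_integral_bernoulliMean_sub_insert_le (hanti : Antitone h) (h0 : ∀ A, 0 ≤ h A)
    (S : Finset V) (hε : ε ∈ Set.Icc (0 : ℝ) 1) :
    ∑ u ∈ S, ∫ t in (0 : ℝ)..ε, bernoulliMean t S (fun A => h A - h (insert u A)) ≤ h ∅ := by
  refine (Finset.sum_le_sum fun u hu => intervalIntegral.integral_mono_on hε.1
    ((continuous_bernoulliMean S _).intervalIntegrable _ _)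
    ((continuous_bernoulliMean (S.erase u) _).intervalIntegrable _ _)
    fun t ht => ?_).trans ((sum_integral_bernoulliMean_sub_insert S h ε).trans_le
      (sub_le_self _ (bernoulliMean_nonneg hε S h0)))
  rw [bernoulliMean_sub_insert hu]
  exact mul_le_of_le_one_left (bernoulliMean_nonneg ⟨ht.1, ht.2.trans hε.2⟩ _ fun A =>
    sub_nonneg.2 (hanti (Finset.subset_insert u A))) (sub_le_self _ ht.1)

lemma measureReal_preimage_singleton_inter [MeasurableSpace Ω] {P : Measure Ω} [IsFiniteMeasure P]
    {s : V → Set Ω} (hs : ∀ v, MeasurableSet (s v)) {D : Set Ω} {p : ℝ}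
    (hind : ∀ T : Finset V, P.real ((⋂ v ∈ T, s v) ∩ D) = p ^ T.card * P.real D)
    {R : Ω → Finset V} (hR : ∀ ω v, v ∈ R ω ↔ v ∈ S ∧ ω ∈ s v) (hA : A ⊆ S) :
    P.real (R ⁻¹' {A} ∩ D) = bernoulliWeight p S A * P.real D := by
  rw [bernoulliWeight, ← measureReal_biInter_inter_biInter_compl hs hind (S \ A) A
    Finset.disjoint_sdiff]
  congr 2
  ext ω
  simp only [Set.mem_preimage, Set.mem_singleton_iff, Finset.ext_iff, hR, Set.mem_inter_iff,
    Set.mem_iInter, Set.mem_compl_iff, Finset.mem_sdiff]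
  constructor
  · exact fun h => ⟨fun v hv => ((h v).2 hv).2, fun v hv hω => hv.2 ((h v).1 ⟨hv.1, hω⟩)⟩
  · exact fun h v => ⟨fun hv => by_contra fun hn => h.2 v ⟨hv.1, hn⟩ hv.2,
      fun hv => ⟨hA hv, h.1 v hv⟩⟩

end BernoulliSubset

namespace Model

variable {X Y' V : Type*} [Fintype X] [Fintype Y'] {Q : X → X → Y' → ℝ} {E : Set (V × V)}
  (M : Model X Y' Q E) {t : ℝ} {S A : Finset V} {B : Set V} {ω ω' : M.Ω}

instance : IsProbabilityMeasure M.P := M.probP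

/-- The labels as simple random variables. -/
def label (v : V) : SimpleFunc M.Ω X :=
  ⟨M.θ v, fun _ => M.measθ v trivial, Set.toFinite _⟩

/-- The labels and the edge observations as a single family of simple random variables, so that
the entropies of labels and observations are values of one set function `jointEntropy`. -/
def data : V ⊕ V × V → SimpleFunc M.Ω (X ⊕ Y')
  | .inl v => (M.label v).map .inl
  | .inr e => SimpleFunc.map .inr ⟨M.Yobs e, fun _ => M.measY e trivial, Set.toFinite _⟩

lemma joint_data_eq_iff {I : Finset (V ⊕ V × V)} :
    joint M.data I ω = joint M.data I ω' ↔
      (∀ v ∈ I.toLeft, M.θ v ω = M.θ v ω') ∧ ∀ e ∈ I.toRight, M.Yobs e ω = M.Yobs e ω' := by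
  simp only [joint_eq_joint_iff, Sum.forall, Finset.mem_toLeft, Finset.mem_toRight]
  exact and_congr
    (forall₂_congr fun v _ => Sum.inl_injective.eq_iff (a := M.θ v ω) (b := M.θ v ω'))
    (forall₂_congr fun e _ => Sum.inr_injective.eq_iff (a := M.Yobs e ω) (b := M.Yobs e ω'))

/-- The random set of vertices of `S` whose label is revealed by the side information at
level `t`. -/
def revealed (t : ℝ) (S : Finset V) (ω : M.Ω) : Finset V :=
  {v ∈ S | M.U v ω ≤ t}

lemma mem_revealed {v : V} : v ∈ M.revealed t S ω ↔ v ∈ S ∧ M.U v ω ≤ t :=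
  Finset.mem_filter

lemma measureReal_revealed_inter_joint_data (ht : t ∈ Set.Icc (0 : ℝ) 1) (hA : A ⊆ S)
    (I : Finset (V ⊕ V × V)) (z : I → X ⊕ Y') :
    M.P.real (M.revealed t S ⁻¹' {A} ∩ joint M.data I ⁻¹' {z}) =
      bernoulliWeight t S A * M.P.real (joint M.data I ⁻¹' {z}) := by
  refine measureReal_preimage_singleton_inter (s := fun v => {ω | M.U v ω ≤ t})
    (fun v => measurableSet_le (M.measU v) measurable_const) (fun T => ?_)
    (fun ω v => M.mem_revealed) hA
  by_cases hz : z ∈ Set.range (joint M.data I)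
  · obtain ⟨ω₀, rfl⟩ := hz
    have hfiber : joint M.data I ⁻¹' {joint M.data I ω₀} =
        {ω | (∀ v ∈ I.toLeft, M.θ v ω = M.θ v ω₀) ∧
          ∀ e ∈ I.toRight, M.Yobs e ω = M.Yobs e ω₀} :=
      Set.ext fun ω => M.joint_data_eq_iff
    have hlaw := M.lawU T (fun _ => t) (fun _ => ht) I.toLeft I.toRight (M.θ · ω₀) (M.Yobs · ω₀)
    rw [hfiber, Measure.real, Measure.real, ← Finset.prod_const, ← hlaw]
    congr 2
    ext ω
    simp
  · simp [Set.preimage_singleton_eq_empty.2 hz]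

lemma measureReal_revealed (ht : t ∈ Set.Icc (0 : ℝ) 1) (hA : A ⊆ S) :
    M.P.real (M.revealed t S ⁻¹' {A}) = bernoulliWeight t S A := by
  have huniv : joint M.data ∅ ⁻¹' {isEmptyElim} = Set.univ :=
    Set.eq_univ_of_forall fun ω => Subsingleton.elim _ _
  simpa [huniv] using M.measureReal_revealed_inter_joint_data ht hA ∅ isEmptyElim

/-- The edges with both endpoints in `S`. -/
def edgesIn (E : Set (V × V)) (S : Finset V) : Finset (V × V) :=
  {e ∈ S ×ˢ S | e ∈ E}

lemma mem_edgesIn {e : V × V} : e ∈ edgesIn E S ↔ e ∈ E ∧ e.1 ∈ S ∧ e.2 ∈ S := by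
  rw [edgesIn, Finset.mem_filter, Finset.mem_product, and_comm]

/-- The entropy of the edge observations inside `S` together with the labels on `W`. -/
def localEntropy (S W : Finset V) : ℝ :=
  jointEntropy M.P M.data (W.disjSum (edgesIn E S))

lemma localEntropy_submodular (S I J K : Finset V) :
    M.localEntropy S (I ∪ J ∪ K) + M.localEntropy S K ≤
      M.localEntropy S (I ∪ K) + M.localEntropy S (J ∪ K) := by
  have h := jointEntropy_submodular (P := M.P) M.data (I.disjSum (edgesIn E S))
    (J.disjSum (edgesIn E S)) (K.disjSum (edgesIn E S))
  simpa only [localEntropy, disjSum_union_disjSum, Finset.union_self] using h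

lemma thetaOn_eq_iff : M.thetaOn B ω = M.thetaOn B ω' ↔ ∀ v ∈ B, M.θ v ω = M.θ v ω' := by
  simp only [thetaOn, funext_iff]
  refine forall_congr' fun v => ?_
  split_ifs with h <;> simp [h]

lemma obsRV_eq_iff : M.obsRV t S ω = M.obsRV t S ω' ↔
    M.revealed t S ω = M.revealed t S ω' ∧ (∀ v ∈ M.revealed t S ω, M.θ v ω = M.θ v ω') ∧
      ∀ e ∈ edgesIn E S, M.Yobs e ω = M.Yobs e ω' := by
  have hedge : (∀ e ∈ edgesIn E S, M.Yobs e ω = M.Yobs e ω') ↔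
      (M.obsRV t S ω).1 = (M.obsRV t S ω').1 := by
    simp only [obsRV, funext_iff, mem_edgesIn, Finset.mem_coe]
    refine forall_congr' fun e => ?_
    split_ifs with h <;> simp [h]
  have hside : (M.revealed t S ω = M.revealed t S ω' ∧
      ∀ v ∈ M.revealed t S ω, M.θ v ω = M.θ v ω') ↔ (M.obsRV t S ω).2 = (M.obsRV t S ω').2 := by
    simp only [obsRV, ξ, funext_iff, Finset.ext_iff, mem_revealed, ← forall_and]
    refine forall_congr' fun v => ?_
    by_cases hv : v ∈ S <;> by_cases h : M.U v ω ≤ t <;> by_cases h' : M.U v ω' ≤ t <;>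
      simp [hv, h, h']
  rw [Prod.ext_iff, ← hedge, ← hside, and_comm, and_assoc]

/-- The chain rule for conditioning on the revealed set: `H(Z) = H(A_t) + H(Z | A_t)`. -/
lemma entropy_eq_add_bernoulliMean (ht : t ∈ Set.Icc (0 : ℝ) 1) {W : Finset V} {β : Type*}
    {Z : M.Ω → β} (hZ : ∀ ω ω', Z ω = Z ω' ↔
      (∀ v ∈ W, M.θ v ω = M.θ v ω') ∧ M.obsRV t S ω = M.obsRV t S ω') :
    entropy M.P Z = entropy M.P (M.revealed t S) +
      bernoulliMean t S fun A => M.localEntropy S (W ∪ A) := by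
  let D (A : Finset V) := joint M.data ((W ∪ A).disjSum (edgesIn E S))
  have hsigma : entropy M.P Z = entropy M.P fun ω =>
      (⟨M.revealed t S ω, D (M.revealed t S ω) ω⟩ :
        Σ A, ((W ∪ A).disjSum (edgesIn E S) → X ⊕ Y')) := by
    refine entropy_congr M.P fun ω ω' => ?_
    rw [sigmaMk_eq_sigmaMk_iff (R := M.revealed t S) (Z := fun A => D A), hZ, obsRV_eq_iff,
      joint_data_eq_iff, Finset.toLeft_disjSum, Finset.toRight_disjSum, Finset.forall_mem_union]
    tauto
  have hmem (ω) : M.revealed t S ω ∈ S.powerset :=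
    Finset.mem_powerset.2 (Finset.filter_subset _ _)
  rw [hsigma, entropy_sigmaMk hmem D fun A hA z => ?_]
  · refine congrArg _ (Finset.sum_congr rfl fun A hA => ?_)
    rw [M.measureReal_revealed ht (Finset.mem_powerset.1 hA)]
    rfl
  · rw [M.measureReal_revealed ht (Finset.mem_powerset.1 hA)]
    exact M.measureReal_revealed_inter_joint_data ht (Finset.mem_powerset.1 hA) _ z

/-- The conditional entropy `H(θ_B | Y_E(S), θ_A)` of the labels on `B` given the edge
observations inside `S` and the labels on `A`, written as a difference of entropies. -/
def residualEntropy (S B A : Finset V) : ℝ :=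
  M.localEntropy S (B ∪ A) - M.localEntropy S A

lemma residualEntropy_nonneg (S B A : Finset V) : 0 ≤ M.residualEntropy S B A :=
  sub_nonneg.2 (jointEntropy_mono _ (Finset.disjSum_mono Finset.subset_union_right subset_rfl))

lemma antitone_residualEntropy (S B : Finset V) : Antitone (M.residualEntropy S B) := by
  intro A A' hAA'
  have h := M.localEntropy_submodular S B A' A
  rw [Finset.union_assoc, Finset.union_eq_left.2 hAA'] at h
  rw [residualEntropy, residualEntropy]
  linarith

lemma jointEntropy_data_disjSum_empty (B : Finset V) :
    jointEntropy M.P M.data (B.disjSum ∅) = jointEntropy M.P M.label B :=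
  entropy_congr M.P fun ω ω' => by
    rw [joint_data_eq_iff, joint_eq_joint_iff, Finset.toLeft_disjSum, Finset.toRight_disjSum]
    exact and_iff_left fun e he => absurd he (Finset.notMem_empty e)

lemma residualEntropy_empty_le (S B : Finset V) :
    M.residualEntropy S B ∅ ≤ B.card * Real.log (Fintype.card X) := by
  have hsub := jointEntropy_submodular (P := M.P) M.data (B.disjSum ∅)
    ((∅ : Finset V).disjSum (edgesIn E S)) ∅
  have hempty : 0 ≤ jointEntropy M.P M.data ∅ := entropy_nonneg _
  have hlabel := jointEntropy_le_card_mul_log (P := M.P) M.label B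
  simp only [Finset.union_empty, disjSum_union_disjSum, Finset.empty_union,
    jointEntropy_data_disjSum_empty] at hsub
  rw [residualEntropy, localEntropy, localEntropy, Finset.union_empty]
  linarith

lemma condMI_obsRV (ht : t ∈ Set.Icc (0 : ℝ) 1) (S : Finset V) (u : V) (B : Finset V) :
    condMI M.P (M.θ u) (M.thetaOn B) (M.obsRV t S) =
      bernoulliMean t S fun A => M.residualEntropy S B A - M.residualEntropy S B (insert u A) := by
  have hu := M.entropy_eq_add_bernoulliMean (S := S) ht (W := {u})
    (Z := fun ω => (M.θ u ω, M.obsRV t S ω)) fun ω ω' => by simp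
  have hB := M.entropy_eq_add_bernoulliMean (S := S) ht (W := B)
    (Z := fun ω => (M.thetaOn B ω, M.obsRV t S ω)) fun ω ω' => by simp [thetaOn_eq_iff]
  have huB := M.entropy_eq_add_bernoulliMean (S := S) ht (W := insert u B)
    (Z := fun ω => (M.θ u ω, M.thetaOn B ω, M.obsRV t S ω)) fun ω ω' => by
      simp [thetaOn_eq_iff, and_assoc]
  have h0 := M.entropy_eq_add_bernoulliMean (S := S) ht (W := ∅) (Z := M.obsRV t S)
    fun ω ω' => by simp
  simp only [Finset.singleton_union, Finset.empty_union, Finset.insert_union] at hu huB h0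
  rw [condMI, hu, hB, huB, h0]
  simp only [residualEntropy, bernoulliMean_sub, Finset.union_insert]
  ring

end Model

theorem statement_6_general {X Y' V : Type*} [Fintype X] [Fintype Y'] {Q : X → X → Y' → ℝ}
    {E : Set (V × V)} (M : Model X Y' Q E) (S : Finset V) {B : Set V} (hB : B.Finite) {ε : ℝ}
    (hε : ε ∈ Set.Icc (0 : ℝ) 1) :
    ∑ u ∈ S, ∫ t in (0 : ℝ)..ε, condMI M.P (M.θ u) (M.thetaOn B) (M.obsRV t S) ≤
      Real.log (Fintype.card X) * B.ncard := by
  lift B to Finset V using hB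
  calc
    _ = ∑ u ∈ S, ∫ t in (0 : ℝ)..ε, bernoulliMean t S fun A =>
          M.residualEntropy S B A - M.residualEntropy S B (insert u A) := by
      refine Finset.sum_congr rfl fun u _ => intervalIntegral.integral_congr fun t ht => ?_
      rw [Set.uIcc_of_le hε.1] at ht
      exact M.condMI_obsRV ⟨ht.1, ht.2.trans hε.2⟩ S u B
    _ ≤ M.residualEntropy S B ∅ := sum_integral_bernoulliMean_sub_insert_le
      (M.antitone_residualEntropy S B) (M.residualEntropy_nonneg S B) S hε
    _ ≤ Real.log (Fintype.card X) * (B : Set V).ncard := by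
      rw [Set.ncard_coe_finset, mul_comm]
      exact M.residualEntropy_empty_le S B

/-- Lemma: mutual information bound. The integrated conditional mutual
information between interior labels and boundary labels given the observations in S is
bounded by log|X| times the size of the boundary. -/
theorem statement_6
    {X Y' V : Type*} [Fintype X] [Fintype Y'] [Nonempty X]
    (hcard : 2 ≤ Fintype.card X)
    (Q : X → X → Y' → ℝ)
    (hQ0 : ∀ x1 x2 y, 0 ≤ Q x1 x2 y) (hQ1 : ∀ x1 x2, ∑ y, Q x1 x2 y = 1)
    (E : Set (V × V))
    (hloop : ∀ e ∈ E, e.1 ≠ e.2)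
    (hori : ∀ u v : V, (u, v) ∈ E → (v, u) ∉ E)
    (M : Model X Y' Q E)
    (hlf : LocallyFiniteGraph (graphOf E))
    (S : Finset V) (hS : S.Nonempty) :
    ∀ ε ∈ Set.Icc (0:ℝ) 1,
      ∑ u ∈ S, (∫ ε' in (0:ℝ)..ε,
          condMI M.P (M.θ u) (M.thetaOn (vBoundary (graphOf E) ↑S)) (M.obsRV ε' ↑S))
        ≤ Real.log (Fintype.card X) * ((vBoundary (graphOf E) ↑S).ncard : ℝ) := by
  intro ε hε
  exact statement_6_general M S (S.finite_toSet.subset fun _ h => h.1) hε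

end
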